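/- arXiv:1407.8443 — 2 statements merged into one kernel-verified Lean document; each statement's English description precedes it below -/
import Mathlib

section
/- Let c, r, s be positive integers with c odd and s ≥ r ≥ 3, and define f(i) = C(c·2^s, i)·S(i, 2^r − 1)·S(c·2^s − i, 2^r) for 2^r − 1 ≤ i ≤ c·2^s − 2^r. If ν₂(i) ≤ r − 2, then ν₂(f(i)) ≥ s + 2. -/
/-!
Write `n = c * 2 ^ s` and `m = ν₂(i) ≤ r - 2`. From `i * C(n, i) = n * C(n - 1, i - 1)` the binomial
coefficient has valuation at least `s - m`, so the two Stirling numbers together must contribute a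
factor `2 ^ (m + 2)`. This comes from the generating function
`∑ S(a + k, k) X ^ a = 1 / ∏_{j = 1}^{k} (1 - j X)`.

* Modulo `2 ^ r`, the substitution `j ↦ 2 ^ r - j` shows that the product with `k = 2 ^ r - 1` is an
  even function of `X`; hence so is its inverse, and twice each coefficient of odd index vanishes
  modulo `2 ^ r`. So `2 ^ (r - 1)` divides `S(a + 2 ^ r - 1, 2 ^ r - 1)` for odd `a`
  (`dvd_stirling_pred`), and, by the recurrence, also `S(a + 2 ^ r, 2 ^ r)` (`dvd_stirling_pow`).
* Modulo `2`, the product with `k = 2 ^ r` is `(1 - X) ^ (2 ^ (r - 1)) = 1 - X ^ (2 ^ (r - 1))`, so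
  `S(a + 2 ^ r, 2 ^ r)` is even unless `2 ^ (r - 1) ∣ a` (`even_stirling_pow`).

If `i` is odd (`m = 0`), then `S(n - i, 2 ^ r)` alone is divisible by `2 ^ (r - 1)`, hence by `4`.
If `i` is even, then `2 ^ (r - 1)` divides `S(i, 2 ^ r - 1)` and `2` divides `S(n - i, 2 ^ r)`,
giving `2 ^ r`, and `r ≥ m + 2`.
-/

/-- Stirling numbers of the second kind -/
def stirling : ℕ → ℕ → ℕ
  | 0, 0 => 1
  | 0, _ + 1 => 0
  | _ + 1, 0 => 0
  | n + 1, k + 1 => stirling n k + (k + 1) * stirling n (k + 1)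

open PowerSeries in
/-- The generating function of `a ↦ S(a + k, k)`, with coefficients in `R`. -/
noncomputable def stirlingGen (R : Type*) [CommRing R] (k : ℕ) : PowerSeries R :=
  PowerSeries.mk fun a => (stirling (a + k) k : R)

open PowerSeries in
/-- The product `∏_{j = 1}^{k} (1 - j X)` over `R`. -/
noncomputable def stirlingProd (R : Type*) [CommRing R] (k : ℕ) : PowerSeries R :=
  ∏ j ∈ Finset.range k, (1 - C ((j : R) + 1) * X)

theorem stirling_eq_zero_of_lt : ∀ {n k : ℕ}, n < k → stirling n k = 0
  | _, 0, h => by omega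
  | 0, _ + 1, _ => by rw [stirling]
  | n + 1, k + 1, h => by
    rw [stirling, stirling_eq_zero_of_lt (by omega), stirling_eq_zero_of_lt (by omega),
      mul_zero, add_zero]

theorem stirling_pos : ∀ {n k : ℕ}, 0 < k → k ≤ n → 0 < stirling n k
  | _, 0, h, _ => by omega
  | 0, _ + 1, _, h => by omega
  | 1, 1, _, _ => by simp [stirling]
  | n + 2, 1, _, _ => by
    have := stirling_pos (n := n + 1) (k := 1) (by omega) (by omega)
    rw [stirling, zero_add, one_mul]; omega
  | n + 1, k + 2, _, h => by
    have := stirling_pos (n := n) (k := k + 1) (by omega) (by omega)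
    rw [stirling]; omega

open PowerSeries in
theorem stirlingGen_succ (R : Type*) [CommRing R] (k : ℕ) :
    (1 - C ((k : R) + 1) * X) * stirlingGen R (k + 1) = stirlingGen R k := by
  ext a
  rw [sub_mul, one_mul, mul_assoc, map_sub, coeff_C_mul]
  rcases a with _ | a
  · simp [stirlingGen, stirling, stirling_eq_zero_of_lt (Nat.lt_succ_self k)]
  · rw [coeff_succ_X_mul]
    simp only [stirlingGen, coeff_mk]
    rw [show a + 1 + (k + 1) = (a + 1 + k) + 1 by ring, stirling,
      show a + (k + 1) = a + 1 + k by ring]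
    push_cast
    ring

theorem stirlingProd_mul_stirlingGen (R : Type*) [CommRing R] (k : ℕ) :
    stirlingProd R k * stirlingGen R k = 1 := by
  induction k with
  | zero =>
    ext a
    rcases a with _ | a <;> simp [stirlingProd, stirlingGen, stirling, PowerSeries.coeff_one]
  | succ k ih =>
    rw [stirlingProd, Finset.prod_range_succ, mul_assoc, stirlingGen_succ]
    exact ih

open PowerSeries in
/-- The product over `1 ≤ j ≤ k` is an even function of `X` modulo `k + 1`, by `j ↦ k + 1 - j`. -/
theorem rescale_stirlingProd (k : ℕ) :
    rescale (-1) (stirlingProd (ZMod (k + 1)) k) = stirlingProd (ZMod (k + 1)) k := by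
  rw [stirlingProd, map_prod, ← Finset.prod_range_reflect]
  refine Finset.prod_congr rfl fun j hj => ?_
  have hj := Finset.mem_range.1 hj
  have h : (((k - 1 - j : ℕ) : ZMod (k + 1)) + 1) = -((j : ZMod (k + 1)) + 1) := by
    have h0 : ((k - 1 - j + 1 + (j + 1) : ℕ) : ZMod (k + 1)) = 0 := by
      rw [show k - 1 - j + 1 + (j + 1) = k + 1 by omega]
      exact ZMod.natCast_self _
    push_cast at h0
    linear_combination h0
  rw [h]
  simp
  ring

open PowerSeries in
theorem rescale_stirlingGen (k : ℕ) :
    rescale (-1) (stirlingGen (ZMod (k + 1)) k) = stirlingGen (ZMod (k + 1)) k := by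
  have h := stirlingProd_mul_stirlingGen (ZMod (k + 1)) k
  have h' := congrArg (rescale (-1)) h
  rw [map_mul, map_one, rescale_stirlingProd] at h'
  calc _ = (stirlingProd (ZMod (k + 1)) k * stirlingGen _ k) * rescale (-1) (stirlingGen _ k) := by
        rw [h, one_mul]
    _ = (stirlingProd (ZMod (k + 1)) k * rescale (-1) (stirlingGen _ k)) * stirlingGen _ k := by ring
    _ = _ := by rw [h', one_mul]

theorem dvd_stirling_pred {r a : ℕ} (hr : 1 ≤ r) (ha : Odd a) :
    2 ^ (r - 1) ∣ stirling (a + (2 ^ r - 1)) (2 ^ r - 1) := by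
  have h := congrArg (PowerSeries.coeff a) (rescale_stirlingGen (2 ^ r - 1))
  rw [PowerSeries.coeff_rescale, ha.neg_one_pow, stirlingGen, PowerSeries.coeff_mk] at h
  have h2 : ((2 * stirling (a + (2 ^ r - 1)) (2 ^ r - 1) : ℕ) : ZMod (2 ^ r - 1 + 1)) = 0 := by
    push_cast
    linear_combination -h
  rw [ZMod.natCast_eq_zero_iff, Nat.sub_add_cancel Nat.one_le_two_pow] at h2
  obtain ⟨t, rfl⟩ := Nat.exists_eq_add_of_le' hr
  rw [pow_succ', Nat.mul_dvd_mul_iff_left two_pos, ← pow_succ'] at h2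
  exact h2

theorem dvd_stirling_pow {r a : ℕ} (hr : 1 ≤ r) (ha : Odd a) :
    2 ^ (r - 1) ∣ stirling (a + 2 ^ r) (2 ^ r) := by
  have h := dvd_stirling_pred hr ha
  obtain ⟨k, hk⟩ : ∃ k, 2 ^ r = k + 1 := ⟨2 ^ r - 1, (Nat.sub_add_cancel Nat.one_le_two_pow).symm⟩
  have hd : 2 ^ (r - 1) ∣ k + 1 := hk ▸ pow_dvd_pow 2 (Nat.sub_le r 1)
  rw [hk, Nat.add_sub_cancel] at h
  rw [hk, ← add_assoc, stirling]
  exact dvd_add h (hd.mul_right _)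

open PowerSeries in
theorem stirlingProd_two_mul (M : ℕ) : stirlingProd (ZMod 2) (2 * M) = (1 - X) ^ M := by
  induction M with
  | zero => simp [stirlingProd]
  | succ M ih =>
    have h2 : (2 : ZMod 2) = 0 := rfl
    have h3 : (1 : ZMod 2) + 1 = 0 := rfl
    rw [stirlingProd] at ih ⊢
    rw [show 2 * (M + 1) = 2 * M + 1 + 1 by ring, Finset.prod_range_succ, Finset.prod_range_succ,
      ih, pow_succ]
    simp [h2, h3]

open PowerSeries in
theorem even_stirling_pow {r a : ℕ} (hr : 1 ≤ r) (ha : ¬ 2 ^ (r - 1) ∣ a) :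
    2 ∣ stirling (a + 2 ^ r) (2 ^ r) := by
  have h := stirlingProd_mul_stirlingGen (ZMod 2) (2 ^ r)
  obtain ⟨t, rfl⟩ := Nat.exists_eq_add_of_le' hr
  have : CharP (PowerSeries (ZMod 2)) 2 :=
    charP_of_injective_algebraMap (R := ZMod 2) (FaithfulSMul.algebraMap_injective _ _) 2
  rw [Nat.add_sub_cancel] at ha
  nth_rewrite 1 [pow_succ'] at h
  rw [stirlingProd_two_mul, sub_pow_char_pow, one_pow, sub_mul, one_mul, sub_eq_iff_eq_add] at h
  -- The coefficients satisfy `g a = g (a - 2 ^ t)`, with `g a = 0` for `0 < a < 2 ^ t`.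
  have key : ∀ a, ¬ 2 ^ t ∣ a → coeff a (stirlingGen (ZMod 2) (2 ^ (t + 1))) = 0 := by
    intro a
    induction a using Nat.strong_induction_on with
    | _ a ih =>
      intro ha
      have ha0 : a ≠ 0 := by rintro rfl; exact ha (dvd_zero _)
      rw [h, map_add, coeff_one, if_neg ha0, zero_add, coeff_X_pow_mul']
      split_ifs with hle
      · exact ih _ (Nat.sub_lt (Nat.pos_of_ne_zero ha0) (by positivity))
          fun hd => ha ((Nat.dvd_sub_iff_left hle dvd_rfl).1 hd)
      · rfl
  have := key a ha
  rwa [stirlingGen, coeff_mk, ZMod.natCast_eq_zero_iff] at this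

theorem val_f_ge_s_add_two (c r s i : ℕ) (hc : 0 < c) (hcodd : Odd c) (hr : 3 ≤ r)
    (hrs : r ≤ s) (hi1 : 2 ^ r - 1 ≤ i) (hi2 : i ≤ c * 2 ^ s - 2 ^ r)
    (hv : padicValNat 2 i ≤ r - 2) :
    s + 2 ≤ padicValNat 2
      ((c * 2 ^ s).choose i * stirling i (2 ^ r - 1) * stirling (c * 2 ^ s - i) (2 ^ r)) := by
  have h8 : 2 ^ 3 ≤ 2 ^ r := Nat.pow_le_pow_right two_pos hr
  have hr1 : 1 ≤ r := by omega
  set n := c * 2 ^ s with hn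
  have hi0 : i ≠ 0 := by omega
  have hB : n.choose i ≠ 0 := (Nat.choose_pos (by omega)).ne'
  have hS : stirling i (2 ^ r - 1) ≠ 0 := (stirling_pos (by omega) hi1).ne'
  have hT : stirling (n - i) (2 ^ r) ≠ 0 := (stirling_pos (by omega) (by omega)).ne'
  rw [padicValNat.mul (mul_ne_zero hB hS) hT, padicValNat.mul hB hS]
  have hbin : s ≤ padicValNat 2 i + padicValNat 2 (n.choose i) := by
    rw [← padicValNat.mul hi0 hB, ← padicValNat_dvd_iff_le (mul_ne_zero hi0 hB)]
    obtain ⟨n', hn'⟩ : ∃ n', n = n' + 1 := ⟨n - 1, by omega⟩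
    obtain ⟨i', rfl⟩ : ∃ i', i = i' + 1 := ⟨i - 1, by omega⟩
    have h := Nat.add_one_mul_choose_eq n' i'
    rw [← hn'] at h
    rw [mul_comm (i' + 1), ← h, hn, mul_assoc]
    exact (dvd_mul_right _ _).mul_left _
  have hsn : ∀ t ≤ s, 2 ^ t ∣ n := fun t ht => (pow_dvd_pow 2 ht).mul_left c
  have h2r : 2 ∣ 2 ^ r := dvd_pow_self 2 (by omega)
  have h2n : 2 ∣ n := by simpa using hsn 1 (by omega)
  have hni : n - i - 2 ^ r + 2 ^ r = n - i := Nat.sub_add_cancel (by omega)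
  by_cases hpar : 2 ∣ i
  · have h1 := dvd_stirling_pred (r := r) (a := i - (2 ^ r - 1)) hr1
      (Nat.odd_iff.2 (by omega))
    rw [Nat.sub_add_cancel hi1, padicValNat_dvd_iff_le hS] at h1
    have h2 : 2 ∣ stirling (n - i) (2 ^ r) := by
      rw [← hni]
      refine even_stirling_pow hr1 fun hd => ?_
      have hd2 := hd.add (pow_dvd_pow 2 (Nat.sub_le r 1))
      rw [hni] at hd2
      have hd3 := (Nat.dvd_sub_iff_right (by omega) (hsn (r - 1) (by omega))).1 hd2
      rw [padicValNat_dvd_iff_le hi0] at hd3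
      omega
    have h2' := one_le_padicValNat_of_dvd hT h2
    omega
  · have h1 := dvd_stirling_pow (r := r) (a := n - i - 2 ^ r) hr1
      (Nat.odd_iff.2 (by omega))
    rw [hni, padicValNat_dvd_iff_le hT] at h1
    rw [padicValNat.eq_zero_of_not_dvd hpar] at hbin
    omega
end

section
/- Let c, r, s be positive integers with c odd and s ≥ r ≥ 3, and define f(i) = C(c·2^s, i)·S(i, 2^r − 1)·S(c·2^s − i, 2^r). If 2^r − 1 ≤ i ≤ c·2^s − 2^r and ν₂(i) = r − 1, then ν₂(f(i)) ≥ s, with equality if and only if s₂(c − 1 − ⌊i/2^s⌋) + s₂(⌊i/2^s⌋) = s₂(c − 1). -/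
/-- binary digit sum -/
def s2 (n : ℕ) : ℕ := (Nat.digits 2 n).sum

/-- The generating function of the `k`-th column, `∑ S(n + k, k) X ^ n`. -/
noncomputable def stirlingSeries (k : ℕ) : PowerSeries ℤ :=
  PowerSeries.mk fun n => (stirling (n + k) k : ℤ)

/-- The expansion of `(1 - X²) ^ (-(d + 1))`. -/
noncomputable def invPowSeries (d : ℕ) : PowerSeries ℤ :=
  PowerSeries.mk fun n => if Even n then ((d + n / 2).choose d : ℤ) else 0

/-- The product of `a - j x` over `1 ≤ j ≤ 2 ^ (q + 2)`. -/
def linProd {R : Type*} [CommRing R] (x : R) (q : ℕ) (a : R) : R :=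
  ∏ j ∈ Finset.range (2 ^ (q + 2)), (a - ((j : R) + 1) * x)

theorem linProd_succ {R : Type*} [CommRing R] (x : R) (q : ℕ) (a : R) :
    linProd x (q + 1) a = linProd x q a * linProd x q (a - 2 ^ (q + 2) * x) := by
  unfold linProd
  rw [show 2 ^ (q + 1 + 2) = 2 ^ (q + 2) + 2 ^ (q + 2) by ring, Finset.prod_range_add]
  congr 1
  refine Finset.prod_congr rfl fun j _ => ?_
  push_cast
  ring

/-- Modulo 2 the derivative of the product with respect to `a` vanishes, which gains a factor 2. -/
theorem linProd_sub_dvd {R : Type*} [CommRing R] (x : R) (q : ℕ) :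
    ∀ a b : R, 2 ∣ a - b → 2 * (a - b) ∣ linProd x q a - linProd x q b := by
  induction q with
  | zero =>
    rintro a b ⟨h, hh⟩
    have ha : a = b + 2 * h := by linear_combination hh
    subst ha
    simp only [linProd, zero_add, show (2 ^ 2 : ℕ) = 4 by norm_num, Finset.prod_range_succ,
      Finset.prod_range_zero]
    refine ⟨(b + h) * ((b + 2 * h) ^ 2 + b ^ 2)
      - 5 * ((b + 2 * h) ^ 2 + (b + 2 * h) * b + b ^ 2) * x + 35 * (b + h) * x ^ 2 - 25 * x ^ 3, ?_⟩
    push_cast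
    ring
  | succ q ih =>
    intro a b hab
    rw [linProd_succ, linProd_succ]
    obtain ⟨u, hu⟩ := ih a b hab
    obtain ⟨v, hv⟩ := ih (a - 2 ^ (q + 2) * x) (b - 2 ^ (q + 2) * x) (by simpa using hab)
    refine ⟨linProd x q a * v + linProd x q (b - 2 ^ (q + 2) * x) * u, ?_⟩
    linear_combination linProd x q a * hv + linProd x q (b - 2 ^ (q + 2) * x) * hu

/-- With `r = q + 3` and `x = X`: the product `∏ (1 - j X)` over `1 ≤ j ≤ 2 ^ r`, modulo `2 ^ r`.
Modulo `2 ^ (r + 1)` the product for `r + 1` is the square of the one for `r`, and squaring gains one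
power of two in the congruence. -/
theorem linProd_one_eq {R : Type*} [CommRing R] (x : R) (q : ℕ) :
    ∃ w : R, linProd x (q + 1) 1 =
      (1 - x ^ 2) ^ (2 ^ (q + 1)) * (1 + 2 ^ (q + 2) * (x + x ^ 2)) + 2 ^ (q + 3) * w := by
  induction q with
  | zero =>
    refine ⟨-5 * x + 68 * x ^ 2 - 566 * x ^ 3 + 2807 * x ^ 4 - 8411 * x ^ 5 + 14765 * x ^ 6
      - 13698 * x ^ 7 + 5040 * x ^ 8, ?_⟩
    simp only [linProd, zero_add, show (2 ^ (1 + 2) : ℕ) = 8 by norm_num, Finset.prod_range_succ,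
      Finset.prod_range_zero]
    push_cast
    ring
  | succ q ih =>
    obtain ⟨w, hw⟩ := ih
    obtain ⟨v, hv⟩ := linProd_sub_dvd x (q + 1) (1 - 2 ^ (q + 1 + 2) * x) 1
      ⟨-2 ^ (q + 2) * x, by ring⟩
    rw [linProd_succ, eq_add_of_sub_eq hv, hw]
    have hD : (1 - x ^ 2) ^ (2 ^ (q + 1 + 1)) = ((1 - x ^ 2) ^ (2 ^ (q + 1))) ^ 2 := by
      rw [← pow_mul, ← pow_succ]
    rw [hD]
    generalize (1 - x ^ 2) ^ (2 ^ (q + 1)) = D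
    refine ⟨-(D * (1 + 2 ^ (q + 2) * (x + x ^ 2)) + 2 ^ (q + 3) * w) * x * v
      + D * (1 + 2 ^ (q + 2) * (x + x ^ 2)) * w + 2 ^ (q + 2) * w ^ 2
      + D ^ 2 * 2 ^ q * (x + x ^ 2) ^ 2, ?_⟩
    ring

open PowerSeries in
theorem stirlingSeries_zero : stirlingSeries 0 = 1 := by
  ext n
  cases n <;> simp [stirlingSeries, stirling, coeff_one]

open PowerSeries in
theorem stirlingSeries_succ (k : ℕ) :
    stirlingSeries (k + 1) * (1 - ((k : PowerSeries ℤ) + 1) * X) = stirlingSeries k := by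
  have hC : ((k : PowerSeries ℤ) + 1) = C ((k : ℤ) + 1) := by simp
  have hz : ∀ n k : ℕ, n < k → stirling n k = 0 := by
    intro n
    induction n with
    | zero => intro k hk; cases k <;> simp_all [stirling]
    | succ n ih =>
      intro k hk
      cases k with
      | zero => omega
      | succ k => simp [stirling, ih k (by omega), ih (k + 1) (by omega)]
  have he : stirlingSeries (k + 1) * (1 - ((k : PowerSeries ℤ) + 1) * X) =
      stirlingSeries (k + 1) - C ((k : ℤ) + 1) * (X * stirlingSeries (k + 1)) := by
    rw [hC]; ring
  rw [he]
  ext n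
  rw [map_sub, coeff_C_mul]
  cases n with
  | zero => simp [stirlingSeries, stirling, hz k (k + 1) (by omega)]
  | succ n =>
    rw [coeff_succ_X_mul]
    simp only [stirlingSeries, coeff_mk]
    rw [show n + 1 + (k + 1) = (n + (k + 1)) + 1 by ring, stirling,
      show n + 1 + k = n + (k + 1) by ring]
    push_cast
    ring

open PowerSeries in
theorem stirlingSeries_mul_prod (k : ℕ) :
    stirlingSeries k * ∏ j ∈ Finset.range k, (1 - ((j : PowerSeries ℤ) + 1) * X) = 1 := by
  induction k with
  | zero => simp [stirlingSeries_zero]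
  | succ k ih =>
    rw [← stirlingSeries_succ k] at ih
    rw [Finset.prod_range_succ, ← mul_assoc, mul_right_comm, ih]

open PowerSeries in
theorem coeff_one_sub_X_sq_mul (φ : PowerSeries ℤ) (n : ℕ) :
    coeff n ((1 - X ^ 2) * φ) = coeff n φ - if 2 ≤ n then coeff (n - 2) φ else 0 := by
  rw [sub_mul, one_mul, map_sub, coeff_X_pow_mul']

open PowerSeries in
theorem one_sub_X_sq_pow_mul_invPowSeries (d : ℕ) :
    (1 - X ^ 2) ^ (d + 1) * invPowSeries d = 1 := by
  induction d with
  | zero =>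
    ext n
    rw [zero_add, pow_one, coeff_one_sub_X_sq_mul]
    rcases n with _ | _ | n
    · simp [invPowSeries]
    · simp [invPowSeries, coeff_one]
    · simp [invPowSeries, coeff_one, Nat.even_add]
  | succ d ih =>
    have h : (1 - X ^ 2) * invPowSeries (d + 1) = invPowSeries d := by
      ext n
      rw [coeff_one_sub_X_sq_mul]
      rcases n with _ | _ | n
      · simp [invPowSeries]
      · simp [invPowSeries]
      · simp only [invPowSeries, coeff_mk, Nat.even_add, even_two, iff_true, Nat.add_sub_cancel,
          show n + 1 + 1 = n + 2 by ring, show 2 ≤ n + 2 by omega, if_true]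
        split_ifs
        · rw [show (n + 2) / 2 = n / 2 + 1 by omega,
            show d + 1 + (n / 2 + 1) = (d + (n / 2 + 1)) + 1 by ring, Nat.choose_succ_succ,
            show d + (n / 2 + 1) = d + 1 + n / 2 by ring]
          push_cast
          ring
        · simp
    rw [pow_succ, mul_assoc, h, ih]

open PowerSeries in
/-- The generating function modulo `2 ^ r`, `r = q + 3`. The factor `1 + 2 ^ (r - 1) * (X + X ^ 2)` stays
in the numerator because it squares to one modulo `2 ^ r`. -/
theorem stirling_gen_dvd (q d : ℕ) (hd : d + 1 = 2 ^ (q + 1)) :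
    (2 ^ (q + 3) : PowerSeries ℤ) ∣
      stirlingSeries (2 ^ (q + 3)) - invPowSeries d * (1 + 2 ^ (q + 2) * (X + X ^ 2)) := by
  have h1 := stirlingSeries_mul_prod (2 ^ (q + 3))
  have h2 := one_sub_X_sq_pow_mul_invPowSeries d
  obtain ⟨w, hw⟩ := linProd_one_eq (X : PowerSeries ℤ) q
  rw [hd] at h2
  unfold linProd at hw
  rw [show q + 1 + 2 = q + 3 by ring] at hw
  rw [hw] at h1
  generalize stirlingSeries (2 ^ (q + 3)) = F at *
  generalize invPowSeries d = G at *
  generalize (1 - X ^ 2 : PowerSeries ℤ) ^ (2 ^ (q + 1)) = D at *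
  refine ⟨-(F * (X + X ^ 2) + F * (2 ^ (q + 1) * (X + X ^ 2) ^ 2)
    + F * G * w * (1 + 2 ^ (q + 2) * (X + X ^ 2))), ?_⟩
  linear_combination (G * (1 + 2 ^ (q + 2) * (X + X ^ 2))) * h1
    - F * (1 + 2 ^ (q + 2) * (X + X ^ 2)) ^ 2 * h2

/-- Lucas' theorem when the last `s` binary digits of the upper index are all ones. -/
theorem choose_mul_two_pow_sub_one_modEq (s : ℕ) : ∀ c j : ℕ, 0 < c →
    (c * 2 ^ s - 1).choose j ≡ (c - 1).choose (j / 2 ^ s) [MOD 2] := by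
  induction s with
  | zero => intro c j _; simp [Nat.ModEq.refl]
  | succ s ih =>
    intro c j hc
    have hpos : 0 < c * 2 ^ s := by positivity
    have e : c * 2 ^ (s + 1) = 2 * (c * 2 ^ s) := by ring
    have : Fact (Nat.Prime 2) := ⟨Nat.prime_two⟩
    have h := @Choose.choose_modEq_choose_mod_mul_choose_div_nat (c * 2 ^ (s + 1) - 1) j 2 _
    rw [show (c * 2 ^ (s + 1) - 1) % 2 = 1 by omega,
      show (c * 2 ^ (s + 1) - 1) / 2 = c * 2 ^ s - 1 by omega] at h
    have h1 : Nat.choose 1 (j % 2) = 1 := by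
      rcases Nat.mod_two_eq_zero_or_one j with h | h <;> simp [h]
    rw [h1, one_mul] at h
    refine h.trans ((ih c (j / 2) hc).trans ?_)
    rw [Nat.div_div_eq_div_mul, pow_succ, mul_comm 2]

theorem odd_choose_iff (n k : ℕ) (h : k ≤ n) :
    Odd (n.choose k) ↔ s2 (n - k) + s2 k = s2 n := by
  have : Fact (Nat.Prime 2) := ⟨Nat.prime_two⟩
  have hn := @sub_one_mul_padicValNat_factorial 2 _ n
  have hk := @sub_one_mul_padicValNat_factorial 2 _ k
  have hnk := @sub_one_mul_padicValNat_factorial 2 _ (n - k)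
  have hC := Nat.choose_pos h
  have hm := congrArg (padicValNat 2) (Nat.choose_mul_factorial_mul_factorial h)
  rw [padicValNat.mul (by positivity) (by positivity), padicValNat.mul (by positivity)
    (by positivity)] at hm
  have l1 := Nat.digit_sum_le 2 n
  have l2 := Nat.digit_sum_le 2 k
  have l3 := Nat.digit_sum_le 2 (n - k)
  have ho : Odd (n.choose k) ↔ padicValNat 2 (n.choose k) = 0 := by
    rw [padicValNat.eq_zero_iff, ← Nat.not_even_iff_odd, even_iff_two_dvd]
    simp [hC.ne']
  rw [ho]
  unfold s2
  omega

open PowerSeries in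
/-- For `r = q + 3` and `i` an odd multiple, at least the third, of `2 ^ (r - 1)`. The even-indexed
coefficient at `i - 2 ^ r` of `(1 - X²) ^ (-2 ^ (r - 2))` is odd and the odd-indexed ones vanish. -/
theorem stirling_two_pow (q k i : ℕ) (hi : i = (2 * k + 3) * 2 ^ (q + 2)) :
    Odd (stirling i (2 ^ (q + 3))) ∧
      (2 ^ (q + 3) : ℤ) ∣ stirling (i + 1) (2 ^ (q + 3)) - 2 ^ (q + 2) := by
  obtain ⟨d, hd⟩ : ∃ d, d + 1 = 2 ^ (q + 1) :=
    ⟨2 ^ (q + 1) - 1, Nat.sub_add_cancel Nat.one_le_two_pow⟩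
  obtain ⟨w, hw⟩ := stirling_gen_dvd q d hd
  have e2 : 2 ^ (q + 2) = 2 * 2 ^ (q + 1) := by ring
  have e3 : 2 ^ (q + 3) = 4 * 2 ^ (q + 1) := by ring
  -- the coefficient index `i - 2 ^ r`
  obtain ⟨v, hv⟩ : ∃ v, v + 1 = (2 * k + 1) * 2 ^ (q + 1) :=
    ⟨(2 * k + 1) * 2 ^ (q + 1) - 1, Nat.sub_add_cancel (Nat.mul_pos (by omega) (by positivity))⟩
  have hiv : i = (2 * v + 2) + 2 ^ (q + 3) := by
    rw [hi, show 2 * v + 2 = 2 * (v + 1) by ring, hv]; ring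
  have hodd : Odd ((d + (v + 1)).choose d) := by
    have h := choose_mul_two_pow_sub_one_modEq (q + 1) (2 * k + 2) d (by omega)
    have e : (2 * k + 2) * 2 ^ (q + 1) - 1 = d + (v + 1) := by
      have : (2 * k + 2) * 2 ^ (q + 1) = (2 * k + 1) * 2 ^ (q + 1) + 2 ^ (q + 1) := by ring
      omega
    rw [e, Nat.div_eq_of_lt (by omega), Nat.choose_zero_right] at h
    exact Nat.odd_iff.2 h
  have hco : ∀ n, (stirling (n + 2 + 2 ^ (q + 3)) (2 ^ (q + 3)) : ℤ) =
      coeff (n + 2) (invPowSeries d) + 2 ^ (q + 2) * (coeff (n + 1) (invPowSeries d)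
        + coeff n (invPowSeries d)) + 2 ^ (q + 3) * coeff (n + 2) w := by
    intro n
    have hF : (stirling (n + 2 + 2 ^ (q + 3)) (2 ^ (q + 3)) : ℤ) =
      coeff (n + 2) (stirlingSeries (2 ^ (q + 3))) := by simp [stirlingSeries]
    have h : stirlingSeries (2 ^ (q + 3)) = invPowSeries d + C (2 ^ (q + 2) : ℤ) *
        (X * invPowSeries d + X * (X * invPowSeries d)) + C (2 ^ (q + 3) : ℤ) * w := by
      simp only [map_pow, map_ofNat]
      linear_combination hw
    rw [hF, h]
    simp only [map_add, coeff_C_mul, coeff_succ_X_mul]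
  obtain ⟨y, hy⟩ := hodd
  constructor
  · have h := hco (2 * v)
    rw [← hiv] at h
    have hG : coeff (2 * v + 2) (invPowSeries d) = 2 * (y : ℤ) + 1 := by
      simp only [invPowSeries, coeff_mk]
      rw [if_pos ⟨v + 1, by ring⟩, show (2 * v + 2) / 2 = v + 1 by omega, hy]
      push_cast; rfl
    rw [hG] at h
    have : Odd (stirling i (2 ^ (q + 3)) : ℤ) := by
      refine ⟨y + 2 ^ (q + 1) * (coeff (2 * v + 1) (invPowSeries d)
        + coeff (2 * v) (invPowSeries d)) + 2 ^ (q + 2) * coeff (2 * v + 2) w, ?_⟩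
      rw [h]; ring
    exact_mod_cast this
  · have h := hco (2 * v + 1)
    rw [show 2 * v + 1 + 2 + 2 ^ (q + 3) = i + 1 by omega] at h
    have hG0 : coeff (2 * v + 1 + 2) (invPowSeries d) = 0 := by
      simp [invPowSeries, Nat.even_add]
    have hG1 : coeff (2 * v + 1 + 1) (invPowSeries d) = 2 * (y : ℤ) + 1 := by
      simp only [invPowSeries, coeff_mk]
      rw [if_pos ⟨v + 1, by ring⟩, show (2 * v + 1 + 1) / 2 = v + 1 by omega, hy]
      push_cast; rfl
    have hG2 : coeff (2 * v + 1) (invPowSeries d) = 0 := by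
      simp [invPowSeries]
    rw [hG0, hG1, hG2] at h
    refine ⟨y + coeff (2 * v + 1 + 2) w, ?_⟩
    rw [h]; ring

theorem exists_odd_mul_of_padicValNat {i e : ℕ} (h0 : i ≠ 0) (hv : padicValNat 2 i = e) :
    ∃ m, i = (2 * m + 1) * 2 ^ e := by
  have : Fact (Nat.Prime 2) := ⟨Nat.prime_two⟩
  obtain ⟨m, hm⟩ : 2 ^ e ∣ i := hv ▸ pow_padicValNat_dvd
  have hnd : ¬ 2 ^ (e + 1) ∣ i := hv ▸ pow_succ_padicValNat_not_dvd h0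
  obtain ⟨t, ht⟩ | ⟨t, ht⟩ := Nat.even_or_odd m
  · exact absurd ⟨t, by rw [hm, ht]; ring⟩ hnd
  · exact ⟨t, by rw [hm, ht]; ring⟩

theorem padicValNat_two_of_int_dvd {a e : ℕ} (h : (2 ^ (e + 1) : ℤ) ∣ a - 2 ^ e) :
    a ≠ 0 ∧ padicValNat 2 a = e := by
  have : Fact (Nat.Prime 2) := ⟨Nat.prime_two⟩
  obtain ⟨w, hw⟩ := h
  have ha : (a : ℤ) = 2 ^ e * (2 * w + 1) := by linear_combination hw
  have hd : 2 ^ e ∣ a := by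
    have : ((2 ^ e : ℕ) : ℤ) ∣ a := ⟨2 * w + 1, by rw [ha]; push_cast; rfl⟩
    exact_mod_cast this
  obtain ⟨m, rfl⟩ := hd
  have hm : (m : ℤ) = 2 * w + 1 := by
    push_cast at ha
    exact mul_left_cancel₀ (by positivity) ha
  have hm2 : ¬ 2 ∣ m := by omega
  have hm0 : m ≠ 0 := by rintro rfl; simp at hm2
  refine ⟨by positivity, ?_⟩
  rw [padicValNat.mul (by positivity) hm0, padicValNat.prime_pow,
    padicValNat.eq_zero_of_not_dvd hm2, add_zero]

theorem val_f_eq_iff (c r s i : ℕ) (hc : 0 < c) (hcodd : Odd c) (hr : 3 ≤ r)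
    (hrs : r ≤ s) (hi1 : 2 ^ r - 1 ≤ i) (hi2 : i ≤ c * 2 ^ s - 2 ^ r)
    (hv : padicValNat 2 i = r - 1) :
    s ≤ padicValNat 2
      ((c * 2 ^ s).choose i * stirling i (2 ^ r - 1) * stirling (c * 2 ^ s - i) (2 ^ r)) ∧
    (padicValNat 2
      ((c * 2 ^ s).choose i * stirling i (2 ^ r - 1) * stirling (c * 2 ^ s - i) (2 ^ r)) = s ↔
      s2 (c - 1 - i / 2 ^ s) + s2 (i / 2 ^ s) = s2 (c - 1)) := by
  have : Fact (Nat.Prime 2) := ⟨Nat.prime_two⟩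
  obtain ⟨q, rfl⟩ : ∃ q, r = q + 3 := ⟨r - 3, by omega⟩
  obtain ⟨p, rfl⟩ : ∃ p, s = q + 3 + p := ⟨s - (q + 3), by omega⟩
  rw [show q + 3 - 1 = q + 2 by omega] at hv
  have e3 : 2 ^ (q + 3) = 2 * 2 ^ (q + 2) := by ring
  have hN : 4 ≤ 2 ^ (q + 2) := by
    have : 1 ≤ 2 ^ q := Nat.one_le_two_pow
    have : 2 ^ (q + 2) = 4 * 2 ^ q := by ring
    omega
  have hi0 : i ≠ 0 := by omega
  obtain ⟨m, hm⟩ := exists_odd_mul_of_padicValNat hi0 hv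
  have hns : c * 2 ^ (q + 3 + p) = (2 * (c * 2 ^ p)) * 2 ^ (q + 2) := by ring
  have hcp : 1 ≤ c * 2 ^ p := Nat.mul_pos hc (by positivity)
  -- Both `i` and `n - i` are odd multiples of `2 ^ (r - 1)`; the bounds on `i` exclude multiplier 1.
  obtain ⟨k, rfl⟩ : ∃ k, m = k + 1 := by
    rcases m with _ | k
    · omega
    · exact ⟨k, rfl⟩
  have hle : 2 ^ (q + 3) ≤ c * 2 ^ (q + 3 + p) := by
    rw [hns, e3]; exact Nat.mul_le_mul_right _ (by omega)
  obtain ⟨l, hl⟩ : ∃ l, c * 2 ^ (q + 3 + p) - i = (2 * l + 3) * 2 ^ (q + 2) := by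
    have h : (2 * (k + 1) + 1 + 2) * 2 ^ (q + 2) ≤ (2 * (c * 2 ^ p)) * 2 ^ (q + 2) := by
      rw [add_mul, ← hm, ← hns, ← e3]; omega
    have h' := Nat.le_of_mul_le_mul_right h (by positivity)
    refine ⟨c * 2 ^ p - k - 3, ?_⟩
    rw [hns, hm, ← Nat.sub_mul]
    congr 1
    omega
  have hA := (stirling_two_pow q l _ hl).1
  have hB := (stirling_two_pow q k i (by rw [hm]; ring)).2
  have hB' : (2 ^ (q + 2 + 1) : ℤ) ∣ (stirling i (2 ^ (q + 3) - 1) : ℤ) - 2 ^ (q + 2) := by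
    obtain ⟨t, ht⟩ : ∃ t, 2 ^ (q + 3) = t + 1 := ⟨2 ^ (q + 3) - 1, by omega⟩
    have ht' : (2 ^ (q + 3) : ℤ) = t + 1 := by exact_mod_cast ht
    -- `S(i + 1, 2 ^ r) = S(i, 2 ^ r - 1) + 2 ^ r * S(i, 2 ^ r)`
    rw [ht, stirling] at hB
    rw [show q + 2 + 1 = q + 3 by ring, ht, Nat.add_sub_cancel]
    obtain ⟨w, hw⟩ := hB
    refine ⟨w - stirling i (t + 1), ?_⟩
    push_cast at hw
    rw [ht'] at hw ⊢
    linear_combination hw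
  obtain ⟨hB0, hBv⟩ := padicValNat_two_of_int_dvd hB'
  have hAv : padicValNat 2 (stirling (c * 2 ^ (q + 3 + p) - i) (2 ^ (q + 3))) = 0 :=
    padicValNat.eq_zero_of_not_dvd hA.not_two_dvd_nat
  have hA0 := hA.pos.ne'
  obtain ⟨j, rfl⟩ : ∃ j, i = j + 1 := ⟨i - 1, by omega⟩
  have hlt : j + 1 < c * 2 ^ (q + 3 + p) := by omega
  obtain ⟨n, hn⟩ : ∃ n, c * 2 ^ (q + 3 + p) = n + 1 := ⟨c * 2 ^ (q + 3 + p) - 1, by omega⟩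
  have hch0 : (n + 1).choose (j + 1) ≠ 0 := (Nat.choose_pos (by omega)).ne'
  have hcl0 : n.choose j ≠ 0 := (Nat.choose_pos (by omega)).ne'
  have hmul := congrArg (padicValNat 2) (Nat.add_one_mul_choose_eq n j)
  rw [padicValNat.mul (by omega) hcl0, padicValNat.mul hch0 (by omega), hv, ← hn,
    padicValNat.mul hc.ne' (by positivity), padicValNat.prime_pow,
    padicValNat.eq_zero_of_not_dvd hcodd.not_two_dvd_nat] at hmul
  -- `i` is not divisible by `2 ^ s`, so `i - 1` and `i` have the same quotient
  have hdiv : j / 2 ^ (q + 3 + p) = (j + 1) / 2 ^ (q + 3 + p) := by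
    rw [Nat.succ_div_of_not_dvd]
    intro hd
    have h1 : 2 ^ (q + 2 + 1) ∣ j + 1 := (pow_dvd_pow 2 (by omega)).trans hd
    rw [padicValNat_dvd_iff_le hi0] at h1
    omega
  have hpar : Odd (n.choose j) ↔ Odd ((c - 1).choose ((j + 1) / 2 ^ (q + 3 + p))) := by
    have h := choose_mul_two_pow_sub_one_modEq (q + 3 + p) c j hc
    rw [hn, Nat.add_sub_cancel, hdiv] at h
    rw [Nat.odd_iff, Nat.odd_iff, h]
  have hkle : (j + 1) / 2 ^ (q + 3 + p) ≤ c - 1 := by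
    have := Nat.div_lt_of_lt_mul (by rwa [mul_comm] at hlt)
    omega
  rw [odd_choose_iff _ _ hkle] at hpar
  have ho : Odd (n.choose j) ↔ padicValNat 2 (n.choose j) = 0 := by
    rw [padicValNat.eq_zero_iff, ← Nat.not_even_iff_odd, even_iff_two_dvd]
    simp [hcl0]
  rw [padicValNat.mul (mul_ne_zero (hn ▸ hch0) hB0) hA0, padicValNat.mul (hn ▸ hch0) hB0, hBv, hAv,
    ← hpar, ho]
  omega
end
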